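/- Let 𝔽 be a field and d ≥ 1 an integer. Let a, b, c, q be nonzero scalars in 𝔽 such that q^{2i} ≠ 1 for 1 ≤ i ≤ d, neither a² nor b² is among q^{2d−2}, q^{2d−4}, …, q^{2−2d}, and none of abc, a^{−1}bc, ab^{−1}c, abc^{−1} is among q^{d−1}, q^{d−3}, …, q^{1−d}. Define θ*_i = bq^{2i−d} + b^{−1}q^{d−2i} for 0 ≤ i ≤ d, and define b_0, b_i (1 ≤ i ≤ d−1), c_i (1 ≤ i ≤ d−1), c_d by the q-Racah formulas: b_0 = (q^{d} − q^{−d})(cq − a^{−1}b^{−1}q^{d})(q^{−1} − abc^{−1}q^{−d})/(bq^{1−d} − b^{−1}q^{d−1}); b_i = (q^{d−i} − q^{i−d})(bq^{i−d} − b^{−1}q^{d−i})(cq^{i+1} − a^{−1}b^{−1}q^{d−i})(q^{−i−1} − abc^{−1}q^{i−d}) / ((bq^{2i−d} − b^{−1}q^{d−2i})(bq^{2i−d+1} − b^{−1}q^{d−2i−1})); c_i = (q^{i} − q^{−i})(bq^{i} − b^{−1}q^{−i})(a^{−1}q^{i−d−1} − b^{−1}c^{−1}q^{−i})(bq^{i}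 − acq^{d−i+1}) / ((bq^{2i−d−1} − b^{−1}q^{d−2i+1})(bq^{2i−d} − b^{−1}q^{d−2i})); c_d = (q^{d} − q^{−d})(a^{−1}q^{−1} − b^{−1}c^{−1}q^{−d})(bq^{d} − acq)/(bq^{d−1} − b^{−1}q^{1−d}). Define φ_1 = b_0(θ*_1 − θ*_0), φ_i = b_{i−1}·[(θ*_i − θ*_0)⋯(θ*_i − θ*_{i−1})] / [(θ*_{i−1} − θ*_0)⋯(θ*_{i−1} − θ*_{i−2})] for 2 ≤ i ≤ d, φ'_i = c_i·[(θ*_{i−1} − θ*_d)⋯(θ*_{i−1} − θ*_i)] / [(θ*_i − θ*_d)⋯(θ*_i − θ*_{i+1})] for 1 ≤ i ≤ d−1, and φ'_d = c_d(θ*_{d−1} − θ*_d). Then for 1 ≤ i ≤ d: φ_i = a^{−1}b^{−1}q^{d+1}(q^{i} − q^{−i})(q^{i−d−1} − q^{d−i+1})(q^{−i} − abcq^{i−d−1})(q^{−i} − abc^{−1}q^{i−d−1}) and φ'_i = ab^{−1}q^{d+1}(q^{i} − q^{−i})(q^{i−d−1} − q^{d−i+1})(q^{−i} − a^{−1}bcq^{i−d−1})(q^{−i}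 − a^{−1}bc^{−1}q^{i−d−1}). -/

import Mathlib

/-!
Every difference of dual eigenvalues factors into two `q`-brackets,
`θ*_i - θ*_j = [b; i + j - d] [1; i - j]` with `[x; k] = x q^k - x⁻¹ q^(-k)`, so the quotient of
products defining `φ_i` telescopes to a few brackets, all but one of which cancel against `b_{i-1}`.
The formula for `φ'_i` needs no second computation: replacing `b` by `b⁻¹` and `i` by `d - i`
fixes the dual eigenvalues and turns `c_i` into `b_{d-i}`, hence `φ'_i` is `φ_{d+1-i}` with `b`
inverted.
-/

section SplitSequences

variable {F : Type*} [Field F]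

/-- The first split sequence `φ_i` of a Leonard system with dual eigenvalues `θ` and intersection
numbers `b_i = β i`, meaningful for `1 ≤ i`. -/
def firstSplit (θ : ℤ → F) (β : ℕ → F) (i : ℕ) : F :=
  β (i - 1) * (∏ j ∈ Finset.range i, (θ i - θ j)) /
    ∏ j ∈ Finset.range (i - 1), (θ ((i : ℤ) - 1) - θ j)

/-- The second split sequence `φ'_i` of a Leonard system of diameter `d` with dual eigenvalues `θ`
and intersection numbers `c_i = γ i`, meaningful for `1 ≤ i ≤ d`. -/
def secondSplit (d : ℕ) (θ : ℤ → F) (γ : ℕ → F) (i : ℕ) : F :=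
  γ i * (∏ j ∈ Finset.Icc i d, (θ ((i : ℤ) - 1) - θ j)) /
    ∏ j ∈ Finset.Icc (i + 1) d, (θ i - θ j)

theorem prod_Icc_eq_prod_range_sub {M : Type*} [CommMonoid M] (f : ℤ → M) (i d : ℕ) :
    ∏ j ∈ Finset.Icc i d, f j = ∏ j ∈ Finset.range (d + 1 - i), f ((d : ℤ) - j) := by
  refine Finset.prod_nbij' (d - ·) (d - ·) ?_ ?_ ?_ ?_ fun j hj => ?_
  case refine_5 => rw [Nat.cast_sub (Finset.mem_Icc.mp hj).2, sub_sub_cancel]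
  all_goals simp only [Finset.mem_Icc, Finset.mem_range]; omega

theorem secondSplit_eq_firstSplit {d i : ℕ} (hid : i ≤ d) {θ θ' : ℤ → F} {β γ : ℕ → F}
    (hθ : ∀ j, θ' j = θ (d - j)) (hβ : β (d - i) = γ i) :
    secondSplit d θ γ i = firstSplit θ' β (d + 1 - i) := by
  have hpred : d + 1 - i - 1 = d - i := by omega
  have hcast : ((d + 1 - i : ℕ) : ℤ) = d + 1 - i := by omega
  have htop : (d : ℤ) - (d + 1 - i) = i - 1 := by ring
  have hbot : (d : ℤ) - (d + 1 - i - 1) = i := by ring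
  rw [secondSplit, firstSplit,
    prod_Icc_eq_prod_range_sub (fun j => θ ((i : ℤ) - 1) - θ j),
    prod_Icc_eq_prod_range_sub (fun j => θ i - θ j)]
  simp only [hpred, hcast, hθ, hβ, htop, hbot, Nat.add_sub_add_right]

end SplitSequences

section Telescoping

variable {M : Type*} [CommMonoid M]

theorem prod_range_add_succ_mul (f : ℤ → M) (n : ℕ) :
    (∏ j ∈ Finset.range (n + 1), f (n + 1 + j)) * f n =
      (∏ j ∈ Finset.range n, f (n + j)) * f (2 * n) * f (2 * n + 1) := by
  calc (∏ j ∈ Finset.range (n + 1), f (n + 1 + j)) * f n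
      = ∏ j ∈ Finset.range (n + 2), f (n + j) := by
        rw [Finset.prod_range_succ' _ (n + 1)]
        simp [add_assoc, add_comm (1 : ℤ)]
    _ = (∏ j ∈ Finset.range n, f (n + j)) * f (2 * n) * f (2 * n + 1) := by
        rw [Finset.prod_range_succ, Finset.prod_range_succ]
        simp [two_mul, add_assoc]

theorem prod_range_succ_sub (f : ℤ → M) (n : ℕ) :
    ∏ j ∈ Finset.range (n + 1), f (n + 1 - j) = (∏ j ∈ Finset.range n, f (n - j)) * f (n + 1) := by
  rw [Finset.prod_range_succ']
  simp

end Telescoping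

section QRacah

variable {F : Type*} [Field F] {d n i : ℕ} {a b c q : F}

/-- The bracket `[x; k] = x q^k - x⁻¹ q^(-k)`. Both kinds of factors in the `q`-Racah formulas are
brackets: those in `q` alone are the case `x = 1`. -/
def qBracket (x q : F) (k : ℤ) : F :=
  x * q ^ k - x⁻¹ * q ^ (-k)

theorem qBracket_one (q : F) (k : ℤ) : qBracket 1 q k = q ^ k - q ^ (-k) := by
  simp [qBracket]

theorem qBracket_eq_zero_iff {x : F} (hx : x ≠ 0) (hq : q ≠ 0) (k : ℤ) :
    qBracket x q k = 0 ↔ x ^ 2 * q ^ (2 * k) = 1 := by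
  have hqk : q ^ k ≠ 0 := zpow_ne_zero k hq
  rw [qBracket, sub_eq_zero, zpow_neg, ← mul_inv, ← mul_eq_one_iff_eq_inv₀ (mul_ne_zero hx hqk),
    ← pow_two, mul_pow, ← zpow_natCast (q ^ k), ← zpow_mul, mul_comm k, Nat.cast_ofNat]

theorem qBracket_inv_neg (x q : F) (k : ℤ) : qBracket x⁻¹ q (-k) = -qBracket x q k := by
  simp [qBracket]

theorem qBracket_mul_qBracket_one (x : F) (hq : q ≠ 0) (s t : ℤ) :
    qBracket x q s * qBracket 1 q t =
      (x * q ^ (s + t) + x⁻¹ * q ^ (-(s + t))) - (x * q ^ (s - t) + x⁻¹ * q ^ (-(s - t))) := by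
  simp only [qBracket, inv_one, sub_eq_add_neg, neg_add, neg_neg, zpow_add₀ hq]
  ring

/-- The dual eigenvalues `θ*_i` of the `q`-Racah Leonard system of diameter `d`. -/
def qRacahDualEigenvalue (d : ℕ) (b q : F) (i : ℤ) : F :=
  b * q ^ (2 * i - (d : ℤ)) + b⁻¹ * q ^ ((d : ℤ) - 2 * i)

/-- The intersection numbers `b_i` of the `q`-Racah Leonard system of diameter `d`. The value at
`i = 0` is separate because a common factor that may vanish is cancelled there. -/
def qRacahB (d : ℕ) (a b c q : F) (i : ℕ) : F :=
  if i = 0 then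
    (q ^ (d : ℤ) - q ^ (-(d : ℤ))) * (c * q - a⁻¹ * b⁻¹ * q ^ (d : ℤ)) *
      (q⁻¹ - a * b * c⁻¹ * q ^ (-(d : ℤ))) /
      (b * q ^ (1 - (d : ℤ)) - b⁻¹ * q ^ ((d : ℤ) - 1))
  else if i = d then 0
  else
    (q ^ ((d : ℤ) - (i : ℤ)) - q ^ ((i : ℤ) - (d : ℤ))) *
      (b * q ^ ((i : ℤ) - (d : ℤ)) - b⁻¹ * q ^ ((d : ℤ) - (i : ℤ))) *
      (c * q ^ ((i : ℤ) + 1) - a⁻¹ * b⁻¹ * q ^ ((d : ℤ) - (i : ℤ))) *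
      (q ^ (-(i : ℤ) - 1) - a * b * c⁻¹ * q ^ ((i : ℤ) - (d : ℤ))) /
      ((b * q ^ (2 * (i : ℤ) - (d : ℤ)) - b⁻¹ * q ^ ((d : ℤ) - 2 * (i : ℤ))) *
        (b * q ^ (2 * (i : ℤ) - (d : ℤ) + 1) - b⁻¹ * q ^ ((d : ℤ) - 2 * (i : ℤ) - 1)))

/-- The intersection numbers `c_i` of the `q`-Racah Leonard system of diameter `d`. The value at
`i = d` is separate because a common factor that may vanish is cancelled there. -/
def qRacahC (d : ℕ) (a b c q : F) (i : ℕ) : F :=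
  if i = 0 then 0
  else if i = d then
    (q ^ (d : ℤ) - q ^ (-(d : ℤ))) * (a⁻¹ * q⁻¹ - b⁻¹ * c⁻¹ * q ^ (-(d : ℤ))) *
      (b * q ^ (d : ℤ) - a * c * q) /
      (b * q ^ ((d : ℤ) - 1) - b⁻¹ * q ^ (1 - (d : ℤ)))
  else
    (q ^ (i : ℤ) - q ^ (-(i : ℤ))) * (b * q ^ (i : ℤ) - b⁻¹ * q ^ (-(i : ℤ))) *
      (a⁻¹ * q ^ ((i : ℤ) - (d : ℤ) - 1) - b⁻¹ * c⁻¹ * q ^ (-(i : ℤ))) *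
      (b * q ^ (i : ℤ) - a * c * q ^ ((d : ℤ) - (i : ℤ) + 1)) /
      ((b * q ^ (2 * (i : ℤ) - (d : ℤ) - 1) - b⁻¹ * q ^ ((d : ℤ) - 2 * (i : ℤ) + 1)) *
        (b * q ^ (2 * (i : ℤ) - (d : ℤ)) - b⁻¹ * q ^ ((d : ℤ) - 2 * (i : ℤ))))

theorem qBracket_ne_zero_of_sq_ne (hb : b ≠ 0) (hq : q ≠ 0)
    (hb2 : ∀ i : ℤ, 1 - (d : ℤ) ≤ i → i ≤ (d : ℤ) - 1 → b ^ 2 ≠ q ^ (2 * i))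
    {k : ℤ} (hk : 1 ≤ k) (hkd : k ≤ 2 * d - 1) : qBracket b q (k - d) ≠ 0 := by
  rw [Ne, qBracket_eq_zero_iff hb hq]
  intro h
  refine hb2 (d - k) (by omega) (by omega) ?_
  rw [eq_inv_of_mul_eq_one_left h, ← zpow_neg]
  ring_nf

theorem qRacahDualEigenvalue_sub (hq : q ≠ 0) (i j : ℤ) :
    qRacahDualEigenvalue d b q i - qRacahDualEigenvalue d b q j =
      qBracket b q (i + j - d) * qBracket 1 q (i - j) := by
  have sum : i + j - d + (i - j) = 2 * i - d := by ring
  have diff : i + j - d - (i - j) = 2 * j - d := by ring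
  rw [qBracket_mul_qBracket_one b hq, sum, diff, neg_sub, neg_sub]
  rfl

theorem qRacahDualEigenvalue_sub_ne_zero (hb : b ≠ 0) (hq : q ≠ 0)
    (hq1 : ∀ i : ℤ, 1 ≤ i → i ≤ d → q ^ (2 * i) ≠ 1)
    (hb2 : ∀ i : ℤ, 1 - (d : ℤ) ≤ i → i ≤ (d : ℤ) - 1 → b ^ 2 ≠ q ^ (2 * i))
    {i j : ℤ} (hj : 0 ≤ j) (hji : j < i) (hid : i ≤ d) :
    qRacahDualEigenvalue d b q i - qRacahDualEigenvalue d b q j ≠ 0 := by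
  rw [qRacahDualEigenvalue_sub hq]
  refine mul_ne_zero (qBracket_ne_zero_of_sq_ne hb hq hb2 (by omega) (by omega)) ?_
  rw [Ne, qBracket_eq_zero_iff one_ne_zero hq, one_pow, one_mul]
  exact hq1 (i - j) (by omega) (by omega)

theorem prod_qRacahDualEigenvalue_sub_mul (hq : q ≠ 0) (n : ℕ) :
    (∏ j ∈ Finset.range (n + 1),
        (qRacahDualEigenvalue d b q (n + 1) - qRacahDualEigenvalue d b q j)) *
        qBracket b q (n - d) =
      qBracket 1 q (n + 1) * (qBracket b q (2 * n - d) * qBracket b q (2 * n + 1 - d)) *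
        ∏ j ∈ Finset.range n, (qRacahDualEigenvalue d b q n - qRacahDualEigenvalue d b q j) := by
  simp only [qRacahDualEigenvalue_sub hq, Finset.prod_mul_distrib]
  have sums := prod_range_add_succ_mul (fun k => qBracket b q (k - d)) n
  rw [prod_range_succ_sub (qBracket 1 q) n, mul_right_comm, sums]
  ring

theorem qRacahB_zero :
    qRacahB d a b c q 0 = qBracket 1 q d * (c * q - a⁻¹ * b⁻¹ * q ^ (d : ℤ)) *
      (q⁻¹ - a * b * c⁻¹ * q ^ (-(d : ℤ))) / qBracket b q (1 - d) := by
  rw [qRacahB, if_pos rfl, qBracket_one, qBracket, neg_sub]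

theorem qRacahB_of_ne_zero (hn : n ≠ 0) :
    qRacahB d a b c q n = qBracket 1 q (d - n) * qBracket b q (n - d) *
      (c * q ^ ((n : ℤ) + 1) - a⁻¹ * b⁻¹ * q ^ ((d : ℤ) - n)) *
      (q ^ (-(n : ℤ) - 1) - a * b * c⁻¹ * q ^ ((n : ℤ) - d)) /
      (qBracket b q (2 * n - d) * qBracket b q (2 * n + 1 - d)) := by
  have shift : (2 * n + 1 - d : ℤ) = 2 * n - d + 1 := by ring
  have shift_neg : -(2 * n - d + 1 : ℤ) = d - 2 * n - 1 := by ring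
  obtain rfl | hnd := eq_or_ne n d
  · simp [qRacahB, qBracket, hn]
  · rw [qRacahB, if_neg hn, if_neg hnd, shift, qBracket_one]
    simp only [qBracket, neg_sub, shift_neg]

theorem firstSplit_qRacah_eq_qBracket (hb : b ≠ 0) (hq : q ≠ 0)
    (hq1 : ∀ i : ℤ, 1 ≤ i → i ≤ d → q ^ (2 * i) ≠ 1)
    (hb2 : ∀ i : ℤ, 1 - (d : ℤ) ≤ i → i ≤ (d : ℤ) - 1 → b ^ 2 ≠ q ^ (2 * i)) (hn : n < d) :
    firstSplit (qRacahDualEigenvalue d b q) (qRacahB d a b c q) (n + 1) =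
      qBracket 1 q (n + 1) * qBracket 1 q (d - n) *
        (c * q ^ ((n : ℤ) + 1) - a⁻¹ * b⁻¹ * q ^ ((d : ℤ) - n)) *
        (q ^ (-(n : ℤ) - 1) - a * b * c⁻¹ * q ^ ((n : ℤ) - d)) := by
  have bracket_ne {k : ℤ} := qBracket_ne_zero_of_sq_ne (k := k) hb hq hb2
  have prod_ne : ∏ j ∈ Finset.range n,
      (qRacahDualEigenvalue d b q n - qRacahDualEigenvalue d b q j) ≠ 0 :=
    Finset.prod_ne_zero_iff.mpr fun j hj => by
      have := Finset.mem_range.mp hj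
      exact qRacahDualEigenvalue_sub_ne_zero hb hq hq1 hb2 (by omega) (by omega) (by omega)
  simp only [firstSplit, Nat.add_sub_cancel, Nat.cast_add_one, add_sub_cancel_right]
  rw [div_eq_iff prod_ne]
  obtain rfl | hn0 := eq_or_ne n 0
  · have h1 := bracket_ne le_rfl (by omega)
    simp only [qRacahB_zero, zero_add, Finset.prod_range_one, Finset.prod_range_zero,
      qRacahDualEigenvalue_sub hq, Nat.cast_zero, add_zero, sub_zero, zero_sub, neg_zero, zpow_one,
      zpow_neg_one]
    field_simp
  · have h2n := bracket_ne (k := 2 * n) (by omega) (by omega)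
    have h2n1 := bracket_ne (k := 2 * n + 1) (by omega) (by omega)
    rw [qRacahB_of_ne_zero hn0, div_mul_eq_mul_div, div_eq_iff (mul_ne_zero h2n h2n1)]
    linear_combination (qBracket 1 q (d - n) *
      (c * q ^ ((n : ℤ) + 1) - a⁻¹ * b⁻¹ * q ^ ((d : ℤ) - n)) *
      (q ^ (-(n : ℤ) - 1) - a * b * c⁻¹ * q ^ ((n : ℤ) - d))) *
      prod_qRacahDualEigenvalue_sub_mul (d := d) (b := b) hq n

theorem firstSplit_qRacah (ha : a ≠ 0) (hb : b ≠ 0) (hq : q ≠ 0)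
    (hq1 : ∀ i : ℤ, 1 ≤ i → i ≤ d → q ^ (2 * i) ≠ 1)
    (hb2 : ∀ i : ℤ, 1 - (d : ℤ) ≤ i → i ≤ (d : ℤ) - 1 → b ^ 2 ≠ q ^ (2 * i))
    (hi : 1 ≤ i) (hid : i ≤ d) :
    firstSplit (qRacahDualEigenvalue d b q) (qRacahB d a b c q) i =
      a⁻¹ * b⁻¹ * q ^ ((d : ℤ) + 1) * (q ^ (i : ℤ) - q ^ (-(i : ℤ))) *
        (q ^ ((i : ℤ) - d - 1) - q ^ ((d : ℤ) - i + 1)) *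
        (q ^ (-(i : ℤ)) - a * b * c * q ^ ((i : ℤ) - d - 1)) *
        (q ^ (-(i : ℤ)) - a * b * c⁻¹ * q ^ ((i : ℤ) - d - 1)) := by
  obtain ⟨n, rfl⟩ := Nat.exists_eq_add_of_le' hi
  have factor : c * q ^ ((n : ℤ) + 1) - a⁻¹ * b⁻¹ * q ^ ((d : ℤ) - n) =
      -(a⁻¹ * b⁻¹ * q ^ ((d : ℤ) + 1) *
        (q ^ (-((n : ℤ) + 1)) - a * b * c * q ^ ((n : ℤ) - d))) := by
    simp only [zpow_add₀ hq, zpow_sub₀ hq, zpow_neg, zpow_one]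
    field_simp
    ring
  have pred : ((n : ℤ) + 1 - d - 1) = n - d := by ring
  have pred_neg : ((d : ℤ) - (n + 1) + 1) = d - n := by ring
  rw [firstSplit_qRacah_eq_qBracket hb hq hq1 hb2 hid, factor, Nat.cast_add_one, pred, pred_neg,
    qBracket_one, qBracket_one, neg_sub, ← neg_add']
  ring

theorem qRacahDualEigenvalue_inv (i : ℤ) :
    qRacahDualEigenvalue d b⁻¹ q i = qRacahDualEigenvalue d b q (d - i) := by
  rw [qRacahDualEigenvalue, qRacahDualEigenvalue, inv_inv, add_comm]
  ring_nf

theorem qRacahC_self (hd : d ≠ 0) :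
    qRacahC d a b c q d = qBracket 1 q d * (a⁻¹ * q⁻¹ - b⁻¹ * c⁻¹ * q ^ (-(d : ℤ))) *
      (b * q ^ (d : ℤ) - a * c * q) / qBracket b q (d - 1) := by
  rw [qRacahC, if_neg hd, if_pos rfl, qBracket_one, qBracket, neg_sub]

theorem qRacahC_of_ne (hi : i ≠ 0) (hid : i ≠ d) :
    qRacahC d a b c q i = qBracket 1 q i * qBracket b q i *
      (a⁻¹ * q ^ ((i : ℤ) - d - 1) - b⁻¹ * c⁻¹ * q ^ (-(i : ℤ))) *
      (b * q ^ (i : ℤ) - a * c * q ^ ((d : ℤ) - i + 1)) /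
      (qBracket b q (2 * i - d - 1) * qBracket b q (2 * i - d)) := by
  have neg_shift : -(2 * i - d - 1 : ℤ) = d - 2 * i + 1 := by ring
  rw [qRacahC, if_neg hi, if_neg hid, qBracket_one]
  simp only [qBracket, neg_sub, neg_shift]

theorem qRacahB_inv_sub (ha : a ≠ 0) (hi : 1 ≤ i) (hid : i ≤ d) :
    qRacahB d a b⁻¹ c q (d - i) = qRacahC d a b c q i := by
  have factors (s t u v : F) : (c * s - a⁻¹ * b⁻¹⁻¹ * t) * (u - a * b⁻¹ * c⁻¹ * v) =
      -((a⁻¹ * u - b⁻¹ * c⁻¹ * v) * (b * t - a * c * s)) := by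
    rw [inv_inv]
    linear_combination (-c * s * u + b⁻¹ * b * c⁻¹ * t * v) * mul_inv_cancel₀ ha
  obtain rfl | hne := eq_or_ne i d
  · have hpole : (1 - i : ℤ) = -(i - 1) := by ring
    rw [Nat.sub_self, qRacahB_zero, qRacahC_self (by omega), hpole, qBracket_inv_neg,
      mul_assoc (qBracket 1 q i), factors, mul_neg, neg_div_neg_eq, mul_assoc (qBracket 1 q i)]
  · have hi_arg : (d : ℤ) - (d - i) = i := by ring
    have hneg_arg : (d : ℤ) - i - d = -i := by ring
    have hpole : 2 * ((d : ℤ) - i) - d = -(2 * i - d) := by ring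
    have hpole_succ : 2 * ((d : ℤ) - i) + 1 - d = -(2 * i - d - 1) := by ring
    have hexp : -((d : ℤ) - i) - 1 = i - d - 1 := by ring
    rw [qRacahB_of_ne_zero (by omega), qRacahC_of_ne (by omega) hne, Nat.cast_sub hid, hi_arg,
      hneg_arg, hpole, hpole_succ, hexp]
    simp only [qBracket_inv_neg]
    rw [mul_assoc, factors]
    ring

theorem secondSplit_qRacah (ha : a ≠ 0) (hb : b ≠ 0) (hc : c ≠ 0) (hq : q ≠ 0)
    (hq1 : ∀ i : ℤ, 1 ≤ i → i ≤ d → q ^ (2 * i) ≠ 1)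
    (hb2 : ∀ i : ℤ, 1 - (d : ℤ) ≤ i → i ≤ (d : ℤ) - 1 → b ^ 2 ≠ q ^ (2 * i))
    (hi : 1 ≤ i) (hid : i ≤ d) :
    secondSplit d (qRacahDualEigenvalue d b q) (qRacahC d a b c q) i =
      a * b⁻¹ * q ^ ((d : ℤ) + 1) * (q ^ (i : ℤ) - q ^ (-(i : ℤ))) *
        (q ^ ((i : ℤ) - d - 1) - q ^ ((d : ℤ) - i + 1)) *
        (q ^ (-(i : ℤ)) - a⁻¹ * b * c * q ^ ((i : ℤ) - d - 1)) *
        (q ^ (-(i : ℤ)) - a⁻¹ * b * c⁻¹ * q ^ ((i : ℤ) - d - 1)) := by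
  have hb2_inv : ∀ k : ℤ, 1 - (d : ℤ) ≤ k → k ≤ (d : ℤ) - 1 → b⁻¹ ^ 2 ≠ q ^ (2 * k) := by
    intro k hk hkd h
    refine hb2 (-k) (by omega) (by omega) ?_
    rw [mul_neg, zpow_neg, ← h, inv_pow, inv_inv]
  have factor (u v : F) (huv : u * v = 1) :
      q ^ ((i : ℤ) - d - 1) - u * q ^ (-(i : ℤ)) =
        -(u * (q ^ (-(i : ℤ)) - v * q ^ ((i : ℤ) - d - 1))) := by
    linear_combination -q ^ ((i : ℤ) - d - 1) * huv
  have hcast : ((d + 1 - i : ℕ) : ℤ) = d - i + 1 := by omega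
  have hneg : -((d : ℤ) - i + 1) = i - d - 1 := by ring
  have hpred : (d : ℤ) - i + 1 - d - 1 = -i := by ring
  have hpred_neg : (d : ℤ) - (d - i + 1) + 1 = i := by ring
  rw [secondSplit_eq_firstSplit hid qRacahDualEigenvalue_inv (qRacahB_inv_sub ha hi hid),
    firstSplit_qRacah ha (inv_ne_zero hb) hq hq1 hb2_inv (by omega) (by omega), hcast, hneg, hpred,
    hpred_neg, factor (a * b⁻¹ * c) (a⁻¹ * b * c⁻¹) (by field_simp),
    factor (a * b⁻¹ * c⁻¹) (a⁻¹ * b * c) (by field_simp)]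
  field_simp
  ring

theorem qRacah_split_sequences_general (ha : a ≠ 0) (hb : b ≠ 0) (hc : c ≠ 0) (hq : q ≠ 0)
    (hq1 : ∀ i : ℤ, 1 ≤ i → i ≤ d → q ^ (2 * i) ≠ 1)
    (hb2 : ∀ i : ℤ, 1 - (d : ℤ) ≤ i → i ≤ (d : ℤ) - 1 → b ^ 2 ≠ q ^ (2 * i))
    (hi : 1 ≤ i) (hid : i ≤ d) :
    firstSplit (qRacahDualEigenvalue d b q) (qRacahB d a b c q) i =
        a⁻¹ * b⁻¹ * q ^ ((d : ℤ) + 1) * (q ^ (i : ℤ) - q ^ (-(i : ℤ))) *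
          (q ^ ((i : ℤ) - d - 1) - q ^ ((d : ℤ) - i + 1)) *
          (q ^ (-(i : ℤ)) - a * b * c * q ^ ((i : ℤ) - d - 1)) *
          (q ^ (-(i : ℤ)) - a * b * c⁻¹ * q ^ ((i : ℤ) - d - 1)) ∧
      secondSplit d (qRacahDualEigenvalue d b q) (qRacahC d a b c q) i =
        a * b⁻¹ * q ^ ((d : ℤ) + 1) * (q ^ (i : ℤ) - q ^ (-(i : ℤ))) *
          (q ^ ((i : ℤ) - d - 1) - q ^ ((d : ℤ) - i + 1)) *
          (q ^ (-(i : ℤ)) - a⁻¹ * b * c * q ^ ((i : ℤ) - d - 1)) *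
          (q ^ (-(i : ℤ)) - a⁻¹ * b * c⁻¹ * q ^ ((i : ℤ) - d - 1)) :=
  ⟨firstSplit_qRacah ha hb hq hq1 hb2 hi hid, secondSplit_qRacah ha hb hc hq hq1 hb2 hi hid⟩

end QRacah

/-- The split sequences of the q-Racah-type Leonard system (Section 7 of the paper):
with the q-Racah dual eigenvalues `θ*_i` and intersection numbers `b_i`, `c_i`, the first
and second split sequences, computed via formulas (7.1)–(7.4), are
`φ_i  = a⁻¹b⁻¹q^{d+1}(qⁱ − q⁻ⁱ)(q^{i−d−1} − q^{d−i+1})(q⁻ⁱ − abcq^{i−d−1})(q⁻ⁱ − abc⁻¹q^{i−d−1})`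
and
`φ'_i = ab⁻¹q^{d+1}(qⁱ − q⁻ⁱ)(q^{i−d−1} − q^{d−i+1})(q⁻ⁱ − a⁻¹bcq^{i−d−1})(q⁻ⁱ − a⁻¹bc⁻¹q^{i−d−1})`
for `1 ≤ i ≤ d`. -/
theorem qRacah_split_sequences {F : Type*} [Field F] (d : ℕ) (hd : 1 ≤ d)
    (a b c q : F) (ha : a ≠ 0) (hb : b ≠ 0) (hc : c ≠ 0) (hq : q ≠ 0)
    (hq1 : ∀ i : ℤ, 1 ≤ i → i ≤ d → q ^ (2 * i) ≠ 1)
    (ha2 : ∀ i : ℤ, 1 - (d : ℤ) ≤ i → i ≤ (d : ℤ) - 1 → a ^ 2 ≠ q ^ (2 * i))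
    (hb2 : ∀ i : ℤ, 1 - (d : ℤ) ≤ i → i ≤ (d : ℤ) - 1 → b ^ 2 ≠ q ^ (2 * i))
    (habc : ∀ i : ℤ, 1 ≤ i → i ≤ d →
      a * b * c ≠ q ^ ((d : ℤ) + 1 - 2 * i) ∧ a⁻¹ * b * c ≠ q ^ ((d : ℤ) + 1 - 2 * i) ∧
      a * b⁻¹ * c ≠ q ^ ((d : ℤ) + 1 - 2 * i) ∧ a * b * c⁻¹ ≠ q ^ ((d : ℤ) + 1 - 2 * i)) :
    let θs : ℤ → F := fun i => b * q ^ (2 * i - (d : ℤ)) + b⁻¹ * q ^ ((d : ℤ) - 2 * i)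
    let bseq : ℕ → F := fun i =>
      if i = 0 then
        (q ^ (d : ℤ) - q ^ (-(d : ℤ))) * (c * q - a⁻¹ * b⁻¹ * q ^ (d : ℤ)) *
          (q⁻¹ - a * b * c⁻¹ * q ^ (-(d : ℤ))) /
          (b * q ^ (1 - (d : ℤ)) - b⁻¹ * q ^ ((d : ℤ) - 1))
      else if i = d then 0
      else
        (q ^ ((d : ℤ) - (i : ℤ)) - q ^ ((i : ℤ) - (d : ℤ))) *
          (b * q ^ ((i : ℤ) - (d : ℤ)) - b⁻¹ * q ^ ((d : ℤ) - (i : ℤ))) *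
          (c * q ^ ((i : ℤ) + 1) - a⁻¹ * b⁻¹ * q ^ ((d : ℤ) - (i : ℤ))) *
          (q ^ (-(i : ℤ) - 1) - a * b * c⁻¹ * q ^ ((i : ℤ) - (d : ℤ))) /
          ((b * q ^ (2 * (i : ℤ) - (d : ℤ)) - b⁻¹ * q ^ ((d : ℤ) - 2 * (i : ℤ))) *
            (b * q ^ (2 * (i : ℤ) - (d : ℤ) + 1) - b⁻¹ * q ^ ((d : ℤ) - 2 * (i : ℤ) - 1)))
    let cseq : ℕ → F := fun i =>
      if i = 0 then 0
      else if i = d then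
        (q ^ (d : ℤ) - q ^ (-(d : ℤ))) * (a⁻¹ * q⁻¹ - b⁻¹ * c⁻¹ * q ^ (-(d : ℤ))) *
          (b * q ^ (d : ℤ) - a * c * q) /
          (b * q ^ ((d : ℤ) - 1) - b⁻¹ * q ^ (1 - (d : ℤ)))
      else
        (q ^ (i : ℤ) - q ^ (-(i : ℤ))) * (b * q ^ (i : ℤ) - b⁻¹ * q ^ (-(i : ℤ))) *
          (a⁻¹ * q ^ ((i : ℤ) - (d : ℤ) - 1) - b⁻¹ * c⁻¹ * q ^ (-(i : ℤ))) *
          (b * q ^ (i : ℤ) - a * c * q ^ ((d : ℤ) - (i : ℤ) + 1)) /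
          ((b * q ^ (2 * (i : ℤ) - (d : ℤ) - 1) - b⁻¹ * q ^ ((d : ℤ) - 2 * (i : ℤ) + 1)) *
            (b * q ^ (2 * (i : ℤ) - (d : ℤ)) - b⁻¹ * q ^ ((d : ℤ) - 2 * (i : ℤ))))
    let φ : ℕ → F := fun i =>
      bseq (i - 1) * (∏ j ∈ Finset.range i, (θs i - θs j)) /
        ∏ j ∈ Finset.range (i - 1), (θs ((i : ℤ) - 1) - θs j)
    let φ' : ℕ → F := fun i =>
      cseq i * (∏ j ∈ Finset.Icc i d, (θs ((i : ℤ) - 1) - θs j)) /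
        ∏ j ∈ Finset.Icc (i + 1) d, (θs i - θs j)
    ∀ i : ℕ, 1 ≤ i → i ≤ d →
      φ i = a⁻¹ * b⁻¹ * q ^ ((d : ℤ) + 1) * (q ^ (i : ℤ) - q ^ (-(i : ℤ))) *
          (q ^ ((i : ℤ) - (d : ℤ) - 1) - q ^ ((d : ℤ) - (i : ℤ) + 1)) *
          (q ^ (-(i : ℤ)) - a * b * c * q ^ ((i : ℤ) - (d : ℤ) - 1)) *
          (q ^ (-(i : ℤ)) - a * b * c⁻¹ * q ^ ((i : ℤ) - (d : ℤ) - 1)) ∧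
      φ' i = a * b⁻¹ * q ^ ((d : ℤ) + 1) * (q ^ (i : ℤ) - q ^ (-(i : ℤ))) *
          (q ^ ((i : ℤ) - (d : ℤ) - 1) - q ^ ((d : ℤ) - (i : ℤ) + 1)) *
          (q ^ (-(i : ℤ)) - a⁻¹ * b * c * q ^ ((i : ℤ) - (d : ℤ) - 1)) *
          (q ^ (-(i : ℤ)) - a⁻¹ * b * c⁻¹ * q ^ ((i : ℤ) - (d : ℤ) - 1)) := by
  intro _ _ _ _ _ i hi hid
  exact qRacah_split_sequences_general ha hb hc hq hq1 hb2 hi hid
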